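/- Let (X, p_X) be a binary memoryless source, β ∈ (0, 1/2), N = 2^n, δ_N = 2^{−N^β}, G_N the n-fold Kronecker power of [[1,0],[1,1]] over F₂, A^N = X^N G_N, V_X = {i : H(A_i | A^{i−1}) > 1 − δ_N}, and H_X = {i : H(A_i | A^{i−1}) > δ_N}. Then: (1) lim_{N→∞} |H_X| / N = H(X); (2) lim_{N→∞} |V_X| / N = H(X); (3) lim_{N→∞} |H_X \ V_X| / N = 0. -/

import Mathlib

open Finset Filter Real

attribute [local instance] Classical.propDecidable

noncomputable section

/-- `p` is a probability mass function on the finite type `α`. -/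
def IsPMF {α : Type*} [Fintype α] (p : α → ℝ) : Prop :=
  (∀ a, 0 ≤ p a) ∧ ∑ a, p a = 1

/-- i.i.d. (product) distribution of `n` copies of a source with pmf `p`. -/
def iid {α : Type*} [Fintype α] (p : α → ℝ) (n : ℕ) : (Fin n → α) → ℝ :=
  fun x => ∏ i, p (x i)

/-- variational distance between two pmfs -/
def VD {α : Type*} [Fintype α] (p q : α → ℝ) : ℝ := ∑ a, |p a - q a|

/-- Shannon entropy, base 2 -/
def Hsh {α : Type*} [Fintype α] (p : α → ℝ) : ℝ := - ∑ a, p a * Real.logb 2 (p a)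

/-- Rényi entropy of order 2, base 2 -/
def H2 {α : Type*} [Fintype α] (p : α → ℝ) : ℝ := - Real.logb 2 (∑ a, (p a) ^ 2)

/-- min-entropy, base 2 -/
def Hinf {α : Type*} [Fintype α] (p : α → ℝ) : ℝ := - Real.logb 2 (⨆ a, p a)

/-- Kullback–Leibler divergence, base 2 -/
def KL {α : Type*} [Fintype α] (p q : α → ℝ) : ℝ := ∑ a, p a * Real.logb 2 (p a / q a)

/-- pushforward of a pmf along a map -/
def push {α β : Type*} [Fintype α] [Fintype β] (p : α → ℝ) (f : α → β) : β → ℝ :=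
  fun b => ∑ a, if f a = b then p a else 0

/-- conditional mutual information `I(X;Y|Q)` of a joint pmf on `Q × X × Y`, base 2:
`I(X;Y|Q) = H(Q,X) + H(Q,Y) - H(Q) - H(Q,X,Y)`. -/
def condMI {Q X Y : Type*} [Fintype Q] [Fintype X] [Fintype Y] (p : Q × X × Y → ℝ) : ℝ :=
  Hsh (fun qx : Q × X => ∑ y, p (qx.1, qx.2, y))
    + Hsh (fun qy : Q × Y => ∑ x, p (qy.1, x, qy.2))
    - Hsh (fun q : Q => ∑ x, ∑ y, p (q, x, y))
    - Hsh p

/-- the set of `ε`-letter-typical sequences of length `n` -/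
def typ {α : Type*} [Fintype α] (p : α → ℝ) (n : ℕ) (ε : ℝ) : Finset (Fin n → α) :=
  Finset.univ.filter fun x =>
    ∀ a, |((Finset.univ.filter fun i => x i = a).card : ℝ) / n - p a| ≤ ε * p a

/-- cumulative distribution function of the standard normal distribution -/
def stdΦ (x : ℝ) : ℝ := ∫ t in Set.Iic x, Real.exp (-(t ^ 2) / 2) / Real.sqrt (2 * Real.pi)

/-- `⌈2^r⌉₊`, the size of a message set `{1,…,2^r}` -/
def e2 (r : ℝ) : ℕ := ⌈(2:ℝ) ^ r⌉₊


/-- the polar transform `G_N = [[1,0],[1,1]]^{⊗n}` over `F₂`, `N = 2^n` -/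
def polarG : (n : ℕ) → Matrix (Fin (2 ^ n)) (Fin (2 ^ n)) (ZMod 2)
  | 0 => 1
  | n + 1 =>
    Matrix.reindex (finProdFinEquiv.trans (finCongr (pow_succ 2 n).symm))
                   (finProdFinEquiv.trans (finCongr (pow_succ 2 n).symm))
      (Matrix.kroneckerMap (· * ·) (polarG n) (Matrix.of ![![1, 0], ![1, 1]]))

/-- the distribution of `A^N = X^N G_N` for an i.i.d. source `X` -/
def polarA (pX : ZMod 2 → ℝ) (n : ℕ) : (Fin (2 ^ n) → ZMod 2) → ℝ :=
  push (iid pX (2 ^ n)) (fun x => Matrix.vecMul x (polarG n))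

/-- conditional entropy `H(A_i | A^{i-1})` of the polarized source -/
def polarCondH (pX : ZMod 2 → ℝ) (n : ℕ) (i : Fin (2 ^ n)) : ℝ :=
  Hsh (push (polarA pX n) (fun a => fun j : Fin ((i : ℕ) + 1) => a (Fin.castLE i.isLt j)))
    - Hsh (push (polarA pX n) (fun a => fun j : Fin (i : ℕ) => a (Fin.castLE i.isLt.le j)))

/-- `δ_N = 2^{-N^β}` -/
def polarδ (n : ℕ) (β : ℝ) : ℝ := (2:ℝ) ^ (-(((2:ℝ) ^ n) ^ β))

/-- the very-high-entropy set `V_X` -/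
def polarV (pX : ZMod 2 → ℝ) (β : ℝ) (n : ℕ) : Finset (Fin (2 ^ n)) :=
  Finset.univ.filter fun i => 1 - polarδ n β < polarCondH pX n i

/-- the high-entropy set `H_X` -/
def polarH (pX : ZMod 2 → ℝ) (β : ℝ) (n : ℕ) : Finset (Fin (2 ^ n)) :=
  Finset.univ.filter fun i => polarδ n β < polarCondH pX n i


/-! ### Abstract combinatorial part -/

lemma pl_sum_double (f : ℕ → ℝ) (N : ℕ) :
    ∑ i ∈ range (N * 2), f i = ∑ i ∈ range N, (f (i * 2) + f (i * 2 + 1)) := by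
  induction N with
  | zero => simp
  | succ N ih =>
    rw [Finset.sum_range_succ, ← ih, show (N + 1) * 2 = N * 2 + 1 + 1 by ring,
      Finset.sum_range_succ, Finset.sum_range_succ]
    ring

lemma pl_sum_pow (f : ℕ → ℝ) (n : ℕ) :
    ∑ i ∈ range (2 ^ (n + 1)), f i = ∑ i ∈ range (2 ^ n), (f (i * 2) + f (i * 2 + 1)) := by
  rw [pow_succ, pl_sum_double]

lemma pl_sum_shift (g : ℕ → ℝ) (m r : ℕ) :
    ∑ i ∈ range (2 ^ (m + r)), g (i / 2 ^ r) = 2 ^ r * ∑ j ∈ range (2 ^ m), g j := by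
  induction r with
  | zero => simp
  | succ r ih =>
    rw [← add_assoc, pl_sum_pow]
    have h1 : ∀ i, (i * 2) / 2 ^ (r + 1) = i / 2 ^ r := fun i => by
      rw [pow_succ, Nat.mul_div_mul_right _ _ (by norm_num)]
    have h2 : ∀ i, (i * 2 + 1) / 2 ^ (r + 1) = i / 2 ^ r := fun i => by
      rw [pow_succ, mul_comm (2 ^ r) 2, ← Nat.div_div_eq_div_mul]
      congr 1; omega
    simp only [h1, h2]
    rw [Finset.sum_add_distrib, ih]; ring

/-- number of the `r` low bits of `i` that equal `b` -/
def plCnt (b : ℕ) : ℕ → ℕ → ℕ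
  | 0, _ => 0
  | r + 1, i => plCnt b r (i / 2) + if i % 2 = b then 1 else 0

lemma plCnt_moment (b : ℕ) (hb : b = 0 ∨ b = 1) (m r : ℕ) :
    ∑ i ∈ range (2 ^ (m + r)), (2 * (plCnt b r i : ℝ) - r) ^ 2 = (r : ℝ) * (2 : ℝ) ^ (m + r) := by
  induction r with
  | zero => simp [plCnt]
  | succ r ih =>
    rw [← add_assoc, pl_sum_pow]
    have h1 : ∀ i, (i * 2) / 2 = i := fun i => by omega
    have h2 : ∀ i, (i * 2 + 1) / 2 = i := fun i => by omega
    have h3 : ∀ i, (i * 2) % 2 = 0 := fun i => by omega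
    have h4 : ∀ i, (i * 2 + 1) % 2 = 1 := fun i => by omega
    simp only [plCnt, h1, h2, h3, h4]
    have : ∀ i ∈ range (2 ^ (m + r)), ((2 * (((plCnt b r i + if 0 = b then 1 else 0 : ℕ)) : ℝ)
        - ((r + 1 : ℕ) : ℝ)) ^ 2 + (2 * (((plCnt b r i + if 1 = b then 1 else 0 : ℕ)) : ℝ)
        - ((r + 1 : ℕ) : ℝ)) ^ 2) = 2 * (2 * (plCnt b r i : ℝ) - r) ^ 2 + 2 := by
      intro i _
      rcases hb with rfl | rfl <;> push_cast <;> simp <;> ring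
    rw [Finset.sum_congr rfl this, Finset.sum_add_distrib, ← Finset.mul_sum, ih]
    simp
    ring

/-- growth of the exponent along a path -/
lemma pl_growth (b : ℕ) (f : ℕ → ℕ → ℝ) (hf0 : ∀ n i, i < 2 ^ n → 0 ≤ f n i)
    (hsq : ∀ n i, i < 2 ^ (n + 1) → i % 2 = b → f (n + 1) i ≤ f n (i / 2) ^ 2)
    (hdb : ∀ n i, i < 2 ^ (n + 1) → f (n + 1) i ≤ 2 * f n (i / 2))
    (m : ℕ) (x : ℝ) (r : ℕ) : ∀ i, i < 2 ^ (m + r) → f m (i / 2 ^ r) ≤ (2:ℝ) ^ (-x) →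
      f (m + r) i ≤ (2:ℝ) ^ (-((x - r) * 2 ^ (plCnt b r i))) := by
  induction r with
  | zero => intro i hi h; simpa [plCnt] using h
  | succ r ih =>
    intro i hi h
    have hi2 : i / 2 < 2 ^ (m + r) := by
      rw [← add_assoc, pow_succ] at hi; omega
    have h' : f m (i / 2 / 2 ^ r) ≤ (2:ℝ) ^ (-x) := by
      rwa [Nat.div_div_eq_div_mul, mul_comm, ← pow_succ]
    have hz := ih _ hi2 h'
    have h0 := hf0 _ _ hi2
    have hP : (1:ℝ) ≤ 2 ^ (plCnt b r (i / 2)) := one_le_pow₀ (by norm_num)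
    by_cases hb : i % 2 = b
    · refine (hsq (m + r) i hi hb).trans ?_
      refine (pow_le_pow_left₀ h0 hz 2).trans ?_
      rw [← Real.rpow_natCast, ← Real.rpow_mul (by norm_num)]
      apply Real.rpow_le_rpow_of_exponent_le (by norm_num)
      simp only [plCnt, hb, if_true]
      push_cast
      rw [pow_succ]
      nlinarith
    · refine (hdb (m + r) i hi).trans ?_
      have : 2 * f (m + r) (i / 2) ≤ 2 * (2:ℝ) ^ (-((x - r) * 2 ^ (plCnt b r (i / 2)))) := by
        linarith
      refine this.trans ?_
      rw [mul_comm, ← Real.rpow_add_one (by norm_num)]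
      apply Real.rpow_le_rpow_of_exponent_le (by norm_num)
      simp only [plCnt, hb, if_false]
      push_cast
      rw [add_zero]
      nlinarith

lemma pl_step {z t : ℝ} (hz : 0 ≤ z) (ht : 0 ≤ t) (h : z ^ 2 + t ^ 2 ≤ 1) :
    √(z * (2 - t)) + √(t * (2 - z)) ≤ 31 / 16 := by
  have hz1 : z ≤ 1 := by nlinarith
  have ht1 : t ≤ 1 := by nlinarith
  have ha := Real.sq_sqrt (show 0 ≤ z * (2 - t) by nlinarith)
  have hb := Real.sq_sqrt (show 0 ≤ t * (2 - z) by nlinarith)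
  set a := √(z * (2 - t))
  set b := √(t * (2 - z))
  have ha0 : 0 ≤ a := Real.sqrt_nonneg _
  have hb0 : 0 ≤ b := Real.sqrt_nonneg _
  have hs : z + t ≤ 3 / 2 := by nlinarith [sq_nonneg (z - t)]
  have hq : z * t ≤ 1 / 2 := by nlinarith [sq_nonneg (z - t)]
  have hq0 : 0 ≤ z * t := mul_nonneg hz ht
  have hab : (a * b) ^ 2 = (z * t) * (4 - 2 * (z + t) + z * t) := by
    rw [mul_pow, ha, hb]; ring
  have hab2 : 2 * (a * b) ≤ 2 * (z * t) + (4 - 2 * (z + t) + z * t) / 2 := by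
    refine (pow_le_pow_iff_left₀ (by positivity) (by nlinarith) (two_ne_zero)).1 ?_
    nlinarith [sq_nonneg (2 * (z * t) - (4 - 2 * (z + t) + z * t) / 2)]
  nlinarith

structure PlHyp (z t : ℕ → ℕ → ℝ) : Prop where
  z0 : ∀ n i, i < 2 ^ n → 0 ≤ z n i
  t0 : ∀ n i, i < 2 ^ n → 0 ≤ t n i
  zt : ∀ n i, i < 2 ^ n → z n i ^ 2 + t n i ^ 2 ≤ 1
  zm : ∀ n i, i < 2 ^ n → z (n + 1) (i * 2) ≤ 2 * z n i - z n i ^ 2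
  zp : ∀ n i, i < 2 ^ n → z (n + 1) (i * 2 + 1) ≤ z n i ^ 2
  tm : ∀ n i, i < 2 ^ n → t (n + 1) (i * 2) ≤ t n i ^ 2
  tp : ∀ n i, i < 2 ^ n → t (n + 1) (i * 2 + 1) ≤ 2 * t n i - t n i ^ 2

lemma pl_potential {z t : ℕ → ℕ → ℝ} (h : PlHyp z t) (n : ℕ) :
    ∑ i ∈ range (2 ^ n), √(z n i * t n i) ≤ 2 ^ n * (31 / 32) ^ n := by
  induction n with
  | zero =>
    have h0 := h.zt 0 0 (by norm_num)
    have h1 := h.z0 0 0 (by norm_num)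
    have h2 := h.t0 0 0 (by norm_num)
    simp only [pow_zero, Finset.range_one, Finset.sum_singleton, mul_one]
    refine Real.sqrt_le_iff.2 ⟨by norm_num, ?_⟩
    nlinarith [sq_nonneg (z 0 0 - t 0 0)]
  | succ n ih =>
    rw [pl_sum_pow]
    have key : ∀ i ∈ range (2 ^ n), √(z (n + 1) (i * 2) * t (n + 1) (i * 2))
        + √(z (n + 1) (i * 2 + 1) * t (n + 1) (i * 2 + 1)) ≤ 31 / 16 * √(z n i * t n i) := by
      intro i hi
      have hi : i < 2 ^ n := by simpa using hi
      have hz := h.z0 n i hi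
      have ht := h.t0 n i hi
      have hzt := h.zt n i hi
      have hs := pl_step hz ht hzt
      have i1 : i * 2 < 2 ^ (n + 1) := by rw [pow_succ]; omega
      have i2 : i * 2 + 1 < 2 ^ (n + 1) := by rw [pow_succ]; omega
      have hz1 : z n i ≤ 1 := by nlinarith
      have ht1 : t n i ≤ 1 := by nlinarith
      have e1 : √(z (n + 1) (i * 2) * t (n + 1) (i * 2)) ≤
          √(z n i * t n i) * √(t n i * (2 - z n i)) := by
        rw [← Real.sqrt_mul (by positivity)]
        apply Real.sqrt_le_sqrt
        calc _ ≤ (2 * z n i - z n i ^ 2) * t n i ^ 2 :=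
              mul_le_mul (h.zm n i hi) (h.tm n i hi) (h.t0 _ _ i1) (by nlinarith)
          _ = _ := by ring
      have e2 : √(z (n + 1) (i * 2 + 1) * t (n + 1) (i * 2 + 1)) ≤
          √(z n i * t n i) * √(z n i * (2 - t n i)) := by
        rw [← Real.sqrt_mul (by positivity)]
        apply Real.sqrt_le_sqrt
        calc _ ≤ z n i ^ 2 * (2 * t n i - t n i ^ 2) :=
              mul_le_mul (h.zp n i hi) (h.tp n i hi) (h.t0 _ _ i2) (by positivity)
          _ = _ := by ring
      nlinarith [Real.sqrt_nonneg (z n i * t n i)]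
    calc _ ≤ ∑ i ∈ range (2 ^ n), 31 / 16 * √(z n i * t n i) := Finset.sum_le_sum key
      _ = 31 / 16 * ∑ i ∈ range (2 ^ n), √(z n i * t n i) := by rw [Finset.mul_sum]
      _ ≤ 31 / 16 * (2 ^ n * (31 / 32) ^ n) := by linarith
      _ = _ := by ring

lemma pl_card_le {N : ℕ} (p : ℕ → Prop) [DecidablePred p] (g : ℕ → ℝ) (h0 : ∀ i ∈ range N, 0 ≤ g i)
    (h1 : ∀ i ∈ range N, p i → 1 ≤ g i) :
    (((range N).filter p).card : ℝ) ≤ ∑ i ∈ range N, g i := by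
  rw [Finset.card_eq_sum_ones, Finset.sum_filter]
  push_cast
  apply Finset.sum_le_sum
  intro i hi
  split_ifs with hp
  · simpa using h1 i hi hp
  · simpa using h0 i hi

lemma pl_path (b : ℕ) (f : ℕ → ℕ → ℝ) (hf0 : ∀ n i, i < 2 ^ n → 0 ≤ f n i)
    (hsq : ∀ n i, i < 2 ^ (n + 1) → i % 2 = b → f (n + 1) i ≤ f n (i / 2) ^ 2)
    (hdb : ∀ n i, i < 2 ^ (n + 1) → f (n + 1) i ≤ 2 * f n (i / 2))
    (α β : ℝ) (hβ : 0 < β) (m q r i : ℕ) (hi : i < 2 ^ (m + q + r)) (hq : 1 ≤ q)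
    (hqr : (r : ℝ) + 2 ≤ q * (2:ℝ) ^ ((q : ℝ) / 4))
    (hr : β * (m + q + r : ℕ) ≤ α * r)
    (h : f m (i / 2 ^ (q + r)) ≤ (2:ℝ) ^ (-(2 * q : ℝ)))
    (hc1 : (q : ℝ) / 4 ≤ plCnt b q (i / 2 ^ r)) (hc2 : α * r ≤ plCnt b r i) :
    2 * f (m + q + r) i < (2:ℝ) ^ (-(((2:ℝ) ^ (m + q + r)) ^ β)) := by
  have hi2 : i / 2 ^ r < 2 ^ (m + q) := by
    rw [Nat.div_lt_iff_lt_mul (by positivity), ← pow_add]; exact hi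
  have h' : f m (i / 2 ^ r / 2 ^ q) ≤ (2:ℝ) ^ (-(2 * q : ℝ)) := by
    rwa [Nat.div_div_eq_div_mul, ← pow_add, add_comm r q]
  have g1 := pl_growth b f hf0 hsq hdb m _ q _ hi2 h'
  have g2 : f (m + q) (i / 2 ^ r) ≤ (2:ℝ) ^ (-((r : ℝ) + 2)) := by
    refine g1.trans ?_
    apply Real.rpow_le_rpow_of_exponent_le (by norm_num)
    have : (2:ℝ) ^ ((q : ℝ) / 4) ≤ 2 ^ (plCnt b q (i / 2 ^ r)) := by
      rw [← Real.rpow_natCast]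
      exact Real.rpow_le_rpow_of_exponent_le (by norm_num) hc1
    have hq0 : (0:ℝ) ≤ q := by positivity
    nlinarith [mul_le_mul_of_nonneg_left this hq0]
  have g3 := pl_growth b f hf0 hsq hdb (m + q) _ r _ hi g2
  set y : ℝ := ((2:ℝ) ^ (m + q + r)) ^ β with hydef
  have hyeq : y = (2:ℝ) ^ (β * (m + q + r : ℕ)) := by
    rw [hydef, ← Real.rpow_natCast, ← Real.rpow_mul (by norm_num), mul_comm]
  have hy1 : 1 < y := by
    rw [hyeq]
    apply Real.one_lt_rpow (by norm_num)
    have : (0:ℝ) < (m + q + r : ℕ) := by exact_mod_cast (by omega : 0 < m + q + r)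
    positivity
  have hyP : y ≤ 2 ^ (plCnt b r i) := by
    rw [hyeq, ← Real.rpow_natCast]
    exact Real.rpow_le_rpow_of_exponent_le (by norm_num) (hr.trans hc2)
  calc 2 * f (m + q + r) i ≤ 2 * (2:ℝ) ^ (-(((r : ℝ) + 2 - r) * 2 ^ (plCnt b r i))) := by linarith
    _ = (2:ℝ) ^ (1 + -(((r : ℝ) + 2 - r) * 2 ^ (plCnt b r i))) := by
        rw [Real.rpow_add (by norm_num), Real.rpow_one]
    _ < _ := by
        apply Real.rpow_lt_rpow_of_exponent_lt (by norm_num)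
        nlinarith

lemma PlHyp.z_sq {z t : ℕ → ℕ → ℝ} (h : PlHyp z t) : ∀ n i, i < 2 ^ (n + 1) → i % 2 = 1 →
    z (n + 1) i ≤ z n (i / 2) ^ 2 := by
  intro n i hi hb
  have := h.zp n (i / 2) (by rw [pow_succ] at hi; omega)
  rwa [show i / 2 * 2 + 1 = i by omega] at this

lemma PlHyp.t_sq {z t : ℕ → ℕ → ℝ} (h : PlHyp z t) : ∀ n i, i < 2 ^ (n + 1) → i % 2 = 0 →
    t (n + 1) i ≤ t n (i / 2) ^ 2 := by
  intro n i hi hb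
  have := h.tm n (i / 2) (by rw [pow_succ] at hi; omega)
  rwa [show i / 2 * 2 = i by omega] at this

lemma PlHyp.z_db {z t : ℕ → ℕ → ℝ} (h : PlHyp z t) : ∀ n i, i < 2 ^ (n + 1) →
    z (n + 1) i ≤ 2 * z n (i / 2) := by
  intro n i hi
  have hi2 : i / 2 < 2 ^ n := by rw [pow_succ] at hi; omega
  have h0 := h.z0 n _ hi2
  have hzt := h.zt n _ hi2
  rcases Nat.mod_two_eq_zero_or_one i with hb | hb
  · have := h.zm n (i / 2) hi2
    rw [show i / 2 * 2 = i by omega] at this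
    nlinarith
  · have := h.z_sq n i hi hb
    nlinarith

lemma PlHyp.t_db {z t : ℕ → ℕ → ℝ} (h : PlHyp z t) : ∀ n i, i < 2 ^ (n + 1) →
    t (n + 1) i ≤ 2 * t n (i / 2) := by
  intro n i hi
  have hi2 : i / 2 < 2 ^ n := by rw [pow_succ] at hi; omega
  have h0 := h.t0 n _ hi2
  have hzt := h.zt n _ hi2
  rcases Nat.mod_two_eq_zero_or_one i with hb | hb
  · have := h.t_sq n i hi hb
    nlinarith
  · have := h.tp n (i / 2) hi2
    rw [show i / 2 * 2 + 1 = i by omega] at this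
    nlinarith

lemma pl_quant {z t : ℕ → ℕ → ℝ} (h : PlHyp z t) (α β : ℝ) (hβ : 0 < β) (hα0 : 0 < α) (hα : α < 1 / 2)
    (D q r : ℕ) (hD : (63 / 64 : ℝ) ^ D ≤ 1 / 4) (hq : 1 ≤ q) (hr1 : 1 ≤ r)
    (hqr : (r : ℝ) + 2 ≤ q * (2:ℝ) ^ ((q : ℝ) / 4))
    (hr : β * (D * q + q + r : ℕ) ≤ α * r) :
    (((range (2 ^ (D * q + q + r))).filter (fun i =>
      (2:ℝ) ^ (-(((2:ℝ) ^ (D * q + q + r)) ^ β)) ≤ 2 * z (D * q + q + r) i ∧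
      (2:ℝ) ^ (-(((2:ℝ) ^ (D * q + q + r)) ^ β)) ≤ 2 * t (D * q + q + r) i)).card : ℝ)
      / 2 ^ (D * q + q + r) ≤ (62 / 63) ^ (D * q) + 8 / q + 2 / (r * (1 - 2 * α) ^ 2) := by
  set m := D * q with hm
  set n := m + q + r with hn
  have hα2 : 0 < 1 - 2 * α := by linarith
  have hq0 : (0:ℝ) < q := by exact_mod_cast hq
  have hr0 : (0:ℝ) < r := by exact_mod_cast hr1
  let u : ℕ → ℝ := fun j => √(z m j * t m j) / (63 / 64) ^ m
  let v : ℕ → ℕ → ℝ := fun b j => (2 * (plCnt b q j : ℝ) - q) ^ 2 * (4 / q ^ 2)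
  let w : ℕ → ℕ → ℝ := fun b i => (2 * (plCnt b r i : ℝ) - r) ^ 2 * (1 / (r ^ 2 * (1 - 2 * α) ^ 2))
  have hu : ∀ j, 0 ≤ u j := fun j => by positivity
  have hv : ∀ b j, 0 ≤ v b j := fun b j => by positivity
  have hw : ∀ b j, 0 ≤ w b j := fun b j => by positivity
  have hvb : ∀ b j, v b j < 1 → (q : ℝ) / 4 ≤ plCnt b q j := by
    intro b j hlt
    by_contra! hc
    apply absurd hlt (not_lt.2 _)
    have : (q / 2 : ℝ) ^ 2 ≤ (2 * (plCnt b q j : ℝ) - q) ^ 2 := by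
      rw [← neg_sq (2 * (plCnt b q j : ℝ) - q)]
      exact pow_le_pow_left₀ (by positivity) (by linarith) 2
    calc (1:ℝ) = (q / 2 : ℝ) ^ 2 * (4 / q ^ 2) := by field_simp; norm_num
      _ ≤ _ := mul_le_mul_of_nonneg_right this (by positivity)
  have hwb : ∀ b j, w b j < 1 → α * r ≤ plCnt b r j := by
    intro b j hlt
    by_contra! hc
    apply absurd hlt (not_lt.2 _)
    have : (r * (1 - 2 * α) : ℝ) ^ 2 ≤ (2 * (plCnt b r j : ℝ) - r) ^ 2 := by
      rw [← neg_sq (2 * (plCnt b r j : ℝ) - r)]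
      exact pow_le_pow_left₀ (by positivity) (by linarith) 2
    calc (1:ℝ) = (r * (1 - 2 * α) : ℝ) ^ 2 * (1 / (r ^ 2 * (1 - 2 * α) ^ 2)) := by field_simp
      _ ≤ _ := mul_le_mul_of_nonneg_right this (by positivity)
  have hγ : ((63 / 64 : ℝ)) ^ m ≤ (2:ℝ) ^ (-(2 * q : ℝ)) := by
    rw [hm, pow_mul]
    calc ((63 / 64 : ℝ) ^ D) ^ q ≤ (1 / 4) ^ q := pow_le_pow_left₀ (by positivity) hD q
      _ = _ := by
        rw [show (-(2 * q : ℝ)) = (-2 : ℝ) * q by ring, Real.rpow_mul (by norm_num), Real.rpow_natCast]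
        congr 1
        rw [Real.rpow_neg (by norm_num)]; norm_num
  have hcard : (((range (2 ^ n)).filter (fun i =>
      (2:ℝ) ^ (-(((2:ℝ) ^ n) ^ β)) ≤ 2 * z n i ∧
      (2:ℝ) ^ (-(((2:ℝ) ^ n) ^ β)) ≤ 2 * t n i)).card : ℝ) ≤
      ∑ i ∈ range (2 ^ n), (u (i / 2 ^ (q + r)) + (v 0 (i / 2 ^ r) + v 1 (i / 2 ^ r))
        + (w 0 i + w 1 i)) := by
    apply pl_card_le
    · intro i _
      have := hu (i / 2 ^ (q + r)); have := hv 0 (i / 2 ^ r); have := hv 1 (i / 2 ^ r)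
      have := hw 0 i; have := hw 1 i
      linarith
    · rintro i hi ⟨hbz, hbt⟩
      have hi : i < 2 ^ n := by simpa using hi
      have a1 := hu (i / 2 ^ (q + r)); have a2 := hv 0 (i / 2 ^ r); have a3 := hv 1 (i / 2 ^ r)
      have a4 := hw 0 i; have a5 := hw 1 i
      by_contra! hlt
      have hj : i / 2 ^ (q + r) < 2 ^ m := by
        rw [Nat.div_lt_iff_lt_mul (by positivity), ← pow_add, ← add_assoc]; exact hi
      have b1 : √(z m (i / 2 ^ (q + r)) * t m (i / 2 ^ (q + r))) < (63 / 64) ^ m := by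
        have : u (i / 2 ^ (q + r)) < 1 := by linarith
        rwa [div_lt_one (by positivity)] at this
      have hz0 := h.z0 m _ hj
      have ht0 := h.t0 m _ hj
      have b2 : z m (i / 2 ^ (q + r)) ≤ (63 / 64) ^ m ∨ t m (i / 2 ^ (q + r)) ≤ (63 / 64) ^ m := by
        by_contra! hc
        apply absurd b1 (not_lt.2 _)
        apply Real.le_sqrt_of_sq_le
        rw [sq]
        exact mul_le_mul hc.1.le hc.2.le (by positivity) hz0
      rcases b2 with b2 | b2
      · exact absurd (pl_path 1 z h.z0 h.z_sq h.z_db α β hβ m q r i hi hq hqr hr (b2.trans hγ)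
          (hvb _ _ (by linarith)) (hwb _ _ (by linarith))) (not_lt.2 hbz)
      · exact absurd (pl_path 0 t h.t0 h.t_sq h.t_db α β hβ m q r i hi hq hqr hr (b2.trans hγ)
          (hvb _ _ (by linarith)) (hwb _ _ (by linarith))) (not_lt.2 hbt)
  have su : ∑ i ∈ range (2 ^ n), u (i / 2 ^ (q + r)) ≤ 2 ^ n * (62 / 63) ^ m := by
    rw [hn, add_assoc, pl_sum_shift, ← Finset.sum_div]
    have := pl_potential h m
    calc _ ≤ 2 ^ (q + r) * ((2 ^ m * (31 / 32) ^ m) / (63 / 64 : ℝ) ^ m) := by gcongr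
      _ = 2 ^ (m + (q + r)) * ((31 / 32) ^ m / (63 / 64 : ℝ) ^ m) := by rw [pow_add]; ring
      _ = _ := by rw [← div_pow]; norm_num
  have sv : ∀ b, (b = 0 ∨ b = 1) → ∑ i ∈ range (2 ^ n), v b (i / 2 ^ r) = 2 ^ n * (4 / q) := by
    intro b hb
    rw [hn, pl_sum_shift, ← Finset.sum_mul, plCnt_moment b hb, pow_add 2 (m + q) r]
    field_simp
  have sw : ∀ b, (b = 0 ∨ b = 1) → ∑ i ∈ range (2 ^ n), w b i =
      2 ^ n * (1 / (r * (1 - 2 * α) ^ 2)) := by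
    intro b hb
    rw [hn, ← Finset.sum_mul, plCnt_moment b hb]
    field_simp
  rw [div_le_iff₀ (by positivity)]
  refine hcard.trans ?_
  simp only [Finset.sum_add_distrib]
  rw [sv 0 (by simp), sv 1 (by simp), sw 0 (by simp), sw 1 (by simp)]
  have e1 : (8:ℝ) / q = 4 / q + 4 / q := by ring
  have e2 : (2:ℝ) / (r * (1 - 2 * α) ^ 2) = 1 / (r * (1 - 2 * α) ^ 2) + 1 / (r * (1 - 2 * α) ^ 2) := by
    ring
  rw [e1, e2]
  linarith

theorem pl_main {z t : ℕ → ℕ → ℝ} (h : PlHyp z t) (β : ℝ) (hβ : 0 < β) (hβ2 : β < 1 / 2) :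
    Tendsto (fun n : ℕ => (((range (2 ^ n)).filter (fun i =>
      (2:ℝ) ^ (-(((2:ℝ) ^ n) ^ β)) ≤ 2 * z n i ∧
      (2:ℝ) ^ (-(((2:ℝ) ^ n) ^ β)) ≤ 2 * t n i)).card : ℝ) / 2 ^ n) atTop (nhds 0) := by
  obtain ⟨α, hβα, hα⟩ := exists_between hβ2
  have hα0 : 0 < α := hβ.trans hβα
  obtain ⟨D, hD⟩ := exists_pow_lt_of_lt_one (show (0:ℝ) < 1 / 4 by norm_num)
    (show (63 / 64 : ℝ) < 1 by norm_num)
  have hD1 : 1 ≤ D := by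
    rcases Nat.eq_zero_or_pos D with rfl | hp
    · norm_num at hD
    · exact hp
  obtain ⟨K, hK⟩ := exists_nat_gt (α * (D + 1) / (α - β))
  rw [div_lt_iff₀ (by linarith)] at hK
  have hK0 : 0 < K := by
    rcases Nat.eq_zero_or_pos K with rfl | hp
    · exfalso
      have : 0 < α * ((D : ℝ) + 1) := by positivity
      simp at hK
      linarith
    · exact hp
  have hK0' : (0:ℝ) < K := by exact_mod_cast hK0
  let q : ℕ → ℕ := fun n => n / K
  let r : ℕ → ℕ := fun n => n - (D + 1) * q n
  have hDK : D + 1 ≤ K := by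
    have : ((D : ℝ) + 1) < K := by nlinarith
    exact_mod_cast this.le
  have hqK : ∀ n, q n * K ≤ n := fun n => Nat.div_mul_le_self n K
  have hn : ∀ n, D * q n + q n + r n = n := by
    intro n
    have h1 : (D + 1) * q n ≤ n := le_trans (by rw [mul_comm]; exact Nat.mul_le_mul_left _ hDK) (hqK n)
    have h2 : (D + 1) * q n = D * q n + q n := by ring
    simp only [r]; omega
  have hrn : ∀ n : ℕ, β * n ≤ α * r n := by
    intro n
    have h1 : (D : ℝ) * q n + q n + r n = n := by exact_mod_cast hn n
    have h2 : (q n : ℝ) * K ≤ n := by exact_mod_cast hqK n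
    have h3 : 0 ≤ (q n : ℝ) := by positivity
    have h4 : α * (D + 1) * q n ≤ (α - β) * n := by nlinarith [mul_le_mul_of_nonneg_left hK.le h3]
    nlinarith
  have hqt : Tendsto q atTop atTop := Nat.tendsto_div_const_atTop hK0.ne'
  have hqt' : Tendsto (fun n => (q n : ℝ)) atTop atTop := tendsto_natCast_atTop_atTop.comp hqt
  have hrt : Tendsto (fun n => (r n : ℝ)) atTop atTop := by
    have : Tendsto (fun n : ℕ => β / α * (n : ℝ)) atTop atTop :=
      tendsto_natCast_atTop_atTop.const_mul_atTop (by positivity)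
    refine tendsto_atTop_mono (fun n => ?_) this
    rw [div_mul_eq_mul_div, div_le_iff₀ hα0, mul_comm (r n : ℝ)]
    exact hrn n
  have hq2 : Tendsto (fun n => (2:ℝ) ^ ((q n : ℝ) / 4)) atTop atTop :=
    (tendsto_rpow_atTop_of_base_gt_one 2 (by norm_num)).comp (hqt'.atTop_div_const (by norm_num))
  have hev1 : ∀ᶠ n in atTop, 1 ≤ q n := hqt.eventually_ge_atTop 1
  have hev2 : ∀ᶠ n in atTop, 1 ≤ r n := by
    filter_upwards [hrt.eventually_ge_atTop 1] with n hh
    exact_mod_cast hh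
  have hev3 : ∀ᶠ n in atTop, (r n : ℝ) + 2 ≤ q n * (2:ℝ) ^ ((q n : ℝ) / 4) := by
    filter_upwards [hq2.eventually_ge_atTop (2 * K + 2), hev1] with n h1 h2
    have h2' : (1:ℝ) ≤ q n := by exact_mod_cast h2
    have h3 : r n ≤ K * (q n + 1) := by
      have := hn n
      have h4 : n < K * (n / K + 1) := Nat.lt_mul_div_succ n hK0
      have : r n ≤ n := Nat.sub_le _ _
      exact this.trans h4.le
    have h3' : (r n : ℝ) ≤ K * (q n + 1) := by exact_mod_cast h3
    nlinarith [mul_le_mul_of_nonneg_left h1 (by linarith : (0:ℝ) ≤ q n)]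
  refine squeeze_zero' (g := fun n => (62 / 63 : ℝ) ^ (q n) + 8 / q n + 2 / (r n * (1 - 2 * α) ^ 2))
    (Eventually.of_forall fun n => by positivity) ?_ ?_
  · filter_upwards [hev1, hev2, hev3] with n h1 h2 h3
    have := pl_quant h α β hβ hα0 hα D (q n) (r n) hD.le h1 h2 h3 (by rw [hn]; exact hrn n)
    rw [hn] at this
    refine this.trans ?_
    have : (62 / 63 : ℝ) ^ (D * q n) ≤ (62 / 63 : ℝ) ^ (q n) :=
      pow_le_pow_of_le_one (by norm_num) (by norm_num) (Nat.le_mul_of_pos_left _ hD1)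
    linarith
  · have t1 : Tendsto (fun n => (62 / 63 : ℝ) ^ (q n)) atTop (nhds 0) :=
      (tendsto_pow_atTop_nhds_zero_of_lt_one (by norm_num) (by norm_num)).comp hqt
    have t2 : Tendsto (fun n => (8:ℝ) / q n) atTop (nhds 0) := hqt'.const_div_atTop 8
    have t3 : Tendsto (fun n => (2:ℝ) / (r n * (1 - 2 * α) ^ 2)) atTop (nhds 0) :=
      (hrt.atTop_mul_const (by have : 0 < 1 - 2 * α := by linarith
                               positivity)).const_div_atTop 2
    simpa using (t1.add t2).add t3

/-! ### Pointwise inequalities -/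

/-- conditional entropy integrand -/
def plPH (a b : ℝ) : ℝ := (a + b) * Real.logb 2 (a + b) - a * Real.logb 2 a - b * Real.logb 2 b
/-- Bhattacharyya integrand -/
def plPZ (a b : ℝ) : ℝ := 2 * √(a * b)
/-- variational integrand -/
def plPT (a b : ℝ) : ℝ := |a - b|

lemma plPH_eq (a b : ℝ) : plPH a b * Real.log 2 =
    a * (Real.log (a + b) - Real.log a) + b * (Real.log (a + b) - Real.log b) := by
  have : Real.log 2 ≠ 0 := (Real.log_pos (by norm_num)).ne'
  simp only [plPH, Real.logb]
  field_simp
  ring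

lemma pl_logA {a c : ℝ} (ha : 0 ≤ a) (hc : 0 < c) : a * (Real.log c - Real.log a) ≤ c - a := by
  rcases ha.eq_or_lt with rfl | ha
  · simp; exact hc.le
  · rw [← Real.log_div hc.ne' ha.ne']
    have := Real.log_le_sub_one_of_pos (div_pos hc ha)
    calc _ ≤ a * (c / a - 1) := mul_le_mul_of_nonneg_left this ha.le
      _ = _ := by field_simp

lemma plPH_nonneg {a b : ℝ} (ha : 0 ≤ a) (hb : 0 ≤ b) : 0 ≤ plPH a b := by
  have hl : 0 < Real.log 2 := Real.log_pos (by norm_num)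
  have key : ∀ {x y : ℝ}, 0 ≤ x → x ≤ y → 0 ≤ x * (Real.log y - Real.log x) := by
    intro x y hx hxy
    rcases hx.eq_or_lt with rfl | hx
    · simp
    · exact mul_nonneg hx.le (sub_nonneg.2 (Real.log_le_log hx hxy))
  have h := plPH_eq a b
  have h1 := key ha (show a ≤ a + b by linarith)
  have h2 := key hb (show b ≤ a + b by linarith)
  by_contra! hc
  nlinarith

lemma plPH_le_one {a b : ℝ} (ha : 0 ≤ a) (hb : 0 ≤ b) : plPH a b ≤ a + b := by
  have hl : 0 < Real.log 2 := Real.log_pos (by norm_num)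
  have h := plPH_eq a b
  rcases (add_nonneg ha hb).eq_or_lt with hs | hs
  · have : a = 0 := by linarith
    have : b = 0 := by linarith
    subst_vars
    simp [plPH]
  · have h1 := pl_logA ha (half_pos hs)
    have h2 := pl_logA hb (half_pos hs)
    rw [Real.log_div hs.ne' (by norm_num)] at h1 h2
    have : plPH a b * Real.log 2 ≤ (a + b) * Real.log 2 := by rw [h]; nlinarith
    exact le_of_mul_le_mul_right this hl

lemma plPH_le_Z {a b : ℝ} (ha : 0 ≤ a) (hb : 0 ≤ b) : plPH a b ≤ 2 * plPZ a b := by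
  have hl : 0.6931471803 < Real.log 2 := Real.log_two_gt_d9
  have h := plPH_eq a b
  rcases (add_nonneg ha hb).eq_or_lt with hs | hs
  · have : a = 0 := by linarith
    have : b = 0 := by linarith
    subst_vars
    simp [plPH, plPZ]
  · have key : ∀ {x s : ℝ}, 0 ≤ x → 0 < s → x * (Real.log s - Real.log x) ≤ 2 * (√x * √s - x) := by
      intro x s hx hs
      have h1 := pl_logA (Real.sqrt_nonneg x) (Real.sqrt_pos.2 hs)
      rw [Real.log_sqrt hs.le, Real.log_sqrt hx] at h1
      have h2 := mul_le_mul_of_nonneg_left h1 (Real.sqrt_nonneg x)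
      have h3 := Real.mul_self_sqrt hx
      have h4 : √x * (√x * (Real.log s / 2 - Real.log x / 2)) = x * (Real.log s - Real.log x) / 2 := by
        rw [← mul_assoc, h3]; ring
      rw [h4] at h2
      nlinarith
    have h1 := key ha hs
    have h2 := key hb hs
    have hZ : plPZ a b = 2 * (√a * √b) := by rw [plPZ, Real.sqrt_mul ha]
    have qa := Real.sq_sqrt ha
    have qb := Real.sq_sqrt hb
    have qs := Real.sq_sqrt hs.le
    have pa := Real.sqrt_nonneg a
    have pb := Real.sqrt_nonneg b
    have ps := Real.sqrt_nonneg (a + b)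
    have h3 : (√a + √b) * √(a + b) ≤ (a + b) + √a * √b := by
      refine (pow_le_pow_iff_left₀ (by positivity) (by positivity) two_ne_zero).1 ?_
      rw [mul_pow, qs]
      have : (√a + √b) ^ 2 = (a + b) + 2 * (√a * √b) := by rw [← qa, ← qb]; simp only [Real.sqrt_sq pa, Real.sqrt_sq pb]; ring
      rw [this]
      nlinarith [sq_nonneg (√a * √b)]
    have h5 : plPH a b * Real.log 2 ≤ plPZ a b := by rw [h, hZ]; nlinarith
    have h6 : 0 ≤ plPZ a b := by rw [hZ]; positivity
    have h7 := plPH_nonneg ha hb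
    nlinarith

lemma plPH_ge_T {a b : ℝ} (ha : 0 ≤ a) (hb : 0 ≤ b) : a + b - plPH a b ≤ 2 * plPT a b := by
  have hl : 0.6931471803 < Real.log 2 := Real.log_two_gt_d9
  have h := plPH_eq a b
  rcases (add_nonneg ha hb).eq_or_lt with hs | hs
  · have : a = 0 := by linarith
    have : b = 0 := by linarith
    subst_vars
    simp [plPH, plPT]
  · have key : ∀ {x s : ℝ}, 0 ≤ x → 0 < s → x * (Real.log 2 + Real.log x - Real.log s) ≤ x * (2 * x / s - 1) := by
      intro x s hx hs
      rcases hx.eq_or_lt with rfl | hx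
      · simp
      · rw [← Real.log_mul (by norm_num) hx.ne', ← Real.log_div (by positivity) hs.ne']
        exact mul_le_mul_of_nonneg_left (Real.log_le_sub_one_of_pos (by positivity)) hx.le
    have h1 := key ha hs
    have h2 := key hb hs
    have h3 : a * (2 * a / (a + b) - 1) + b * (2 * b / (a + b) - 1) ≤ |a - b| := by
      have : a * (2 * a / (a + b) - 1) + b * (2 * b / (a + b) - 1) = |a - b| ^ 2 / (a + b) := by
        rw [sq_abs]; field_simp; ring
      rw [this, div_le_iff₀ hs, sq]
      apply mul_le_mul_of_nonneg_left _ (abs_nonneg _)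
      rw [abs_le]; constructor <;> linarith
    have h5 : (a + b - plPH a b) * Real.log 2 ≤ |a - b| := by rw [sub_mul, h]; nlinarith
    have h7 := plPH_le_one ha hb
    simp only [plPT]
    nlinarith [abs_nonneg (a - b)]

lemma plPZ_minus {a b c d : ℝ} (ha : 0 ≤ a) (hb : 0 ≤ b) (hc : 0 ≤ c) (hd : 0 ≤ d) :
    plPZ (a * c + b * d) (b * c + a * d) ≤
      plPZ a b * (c + d) + (a + b) * plPZ c d - plPZ a b * plPZ c d := by
  obtain ⟨x, hx, rfl⟩ : ∃ x, 0 ≤ x ∧ a = x ^ 2 := ⟨√a, Real.sqrt_nonneg _, (Real.sq_sqrt ha).symm⟩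
  obtain ⟨y, hy, rfl⟩ : ∃ x, 0 ≤ x ∧ b = x ^ 2 := ⟨√b, Real.sqrt_nonneg _, (Real.sq_sqrt hb).symm⟩
  obtain ⟨u, hu, rfl⟩ : ∃ x, 0 ≤ x ∧ c = x ^ 2 := ⟨√c, Real.sqrt_nonneg _, (Real.sq_sqrt hc).symm⟩
  obtain ⟨v, hv, rfl⟩ : ∃ x, 0 ≤ x ∧ d = x ^ 2 := ⟨√d, Real.sqrt_nonneg _, (Real.sq_sqrt hd).symm⟩
  have e1 : √(x ^ 2 * y ^ 2) = x * y := by rw [← mul_pow, Real.sqrt_sq (by positivity)]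
  have e2 : √(u ^ 2 * v ^ 2) = u * v := by rw [← mul_pow, Real.sqrt_sq (by positivity)]
  simp only [plPZ, e1, e2]
  have : √((x ^ 2 * u ^ 2 + y ^ 2 * v ^ 2) * (y ^ 2 * u ^ 2 + x ^ 2 * v ^ 2)) ≤
      x * y * (u ^ 2 + v ^ 2) + (x ^ 2 + y ^ 2) * (u * v) - 2 * (x * y) * (u * v) := by
    apply Real.sqrt_le_iff.2
    constructor
    · have : x * y * (u ^ 2 + v ^ 2) + (x ^ 2 + y ^ 2) * (u * v) - 2 * (x * y) * (u * v) =
        x * y * (u ^ 2 + v ^ 2) + (x - y) ^ 2 * (u * v) := by ring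
      rw [this]; positivity
    · have : (x * y * (u ^ 2 + v ^ 2) + (x ^ 2 + y ^ 2) * (u * v) - 2 * (x * y) * (u * v)) ^ 2 =
        (x ^ 2 * u ^ 2 + y ^ 2 * v ^ 2) * (y ^ 2 * u ^ 2 + x ^ 2 * v ^ 2) +
          2 * (x * y * u * v) * ((x - y) ^ 2 * (u - v) ^ 2) := by ring
      rw [this]
      have : 0 ≤ 2 * (x * y * u * v) * ((x - y) ^ 2 * (u - v) ^ 2) := by positivity
      linarith
  linarith

lemma plPZ_plus {a b c d : ℝ} (ha : 0 ≤ a) (hb : 0 ≤ b) :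
    plPZ (a * c) (b * d) + plPZ (b * c) (a * d) = plPZ a b * plPZ c d := by
  simp only [plPZ]
  rw [show a * c * (b * d) = (a * b) * (c * d) by ring, show b * c * (a * d) = (a * b) * (c * d) by ring,
    Real.sqrt_mul (mul_nonneg ha hb)]
  ring

lemma plPT_minus (a b c d : ℝ) :
    plPT (a * c + b * d) (b * c + a * d) = plPT a b * plPT c d := by
  simp only [plPT]
  rw [← abs_mul]
  congr 1; ring

lemma plPT_plus {a b c d : ℝ} (ha : 0 ≤ a) (hb : 0 ≤ b) (hc : 0 ≤ c) (hd : 0 ≤ d) :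
    plPT (a * c) (b * d) + plPT (b * c) (a * d) ≤
      plPT a b * (c + d) + (a + b) * plPT c d - plPT a b * plPT c d := by
  simp only [plPT]
  have h1 : |a - b| ≤ a + b := by rw [abs_le]; constructor <;> linarith
  have h2 : |c - d| ≤ c + d := by rw [abs_le]; constructor <;> linarith
  have e1 : |a - b| * (c + d) = |(a * c - b * d) - (b * c - a * d)| := by
    rw [← abs_of_nonneg (add_nonneg hc hd), ← abs_mul]; congr 1; ring
  have e2 : (a + b) * |c - d| = |(a * c - b * d) + (b * c - a * d)| := by
    rw [← abs_of_nonneg (add_nonneg ha hb), ← abs_mul]; congr 1; ring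
  have k1 : |a - b| * |c - d| ≤ |a - b| * (c + d) := mul_le_mul_of_nonneg_left h2 (abs_nonneg _)
  have k2 : |a - b| * |c - d| ≤ (a + b) * |c - d| := mul_le_mul_of_nonneg_right h1 (abs_nonneg _)
  rw [e1] at *
  rw [e2] at *
  generalize a * c - b * d = A at *
  generalize b * c - a * d = B at *
  generalize |a - b| * |c - d| = C at *
  rcases abs_cases A with hA | hA <;> rcases abs_cases B with hB | hB <;>
    rcases abs_cases (A - B) with hC | hC <;> rcases abs_cases (A + B) with hD | hD <;> linarith

lemma plPZT (a b : ℝ) (ha : 0 ≤ a) (hb : 0 ≤ b) : plPZ a b ^ 2 + plPT a b ^ 2 = (a + b) ^ 2 := by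
  simp only [plPZ, plPT]
  rw [mul_pow, Real.sq_sqrt (mul_nonneg ha hb), sq_abs]; ring

lemma pl_minkowski {ι : Type*} [Fintype ι] (A B C : ι → ℝ) (hC : ∀ i, 0 ≤ C i)
    (h : ∀ i, A i ^ 2 + B i ^ 2 = C i ^ 2) (h1 : ∑ i, C i = 1) :
    (∑ i, A i) ^ 2 + (∑ i, B i) ^ 2 ≤ 1 := by
  set X := ∑ i, A i with hX
  set Y := ∑ i, B i with hY
  have hR := Real.sq_sqrt (show 0 ≤ X ^ 2 + Y ^ 2 by positivity)
  set R := √(X ^ 2 + Y ^ 2)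
  have hR0 : 0 ≤ R := Real.sqrt_nonneg _
  have key : X ^ 2 + Y ^ 2 ≤ R := by
    calc X ^ 2 + Y ^ 2 = ∑ i, (X * A i + Y * B i) := by
          rw [Finset.sum_add_distrib, ← Finset.mul_sum, ← Finset.mul_sum, ← hX, ← hY]; ring
      _ ≤ ∑ i, R * C i := by
          apply Finset.sum_le_sum
          intro i _
          apply le_of_abs_le
          apply abs_le_of_sq_le_sq _ (mul_nonneg hR0 (hC i))
          rw [mul_pow, hR, ← h i]
          nlinarith [sq_nonneg (X * B i - Y * A i)]
      _ = R := by rw [← Finset.mul_sum, h1, mul_one]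
  rw [← hR] at key ⊢
  have : R ≤ 1 := by nlinarith
  nlinarith

/-! ### The polar transform -/

lemma pl_sum_zmod2 (f : ZMod 2 → ℝ) : ∑ b, f b = f 0 + f 1 := Fin.sum_univ_two f

lemma pl_add_cancel (a b : ZMod 2) : a + b + b = a := by
  rw [add_assoc, CharTwo.add_self_eq_zero, add_zero]

/-- polar relabelling -/
def plDbl {ι J : Type*} (e : ι × Fin 2 ≃ J) : (J → ZMod 2) ≃ (ι → ZMod 2) × (ι → ZMod 2) where
  toFun y := (fun j => y (e (j, 0)) + y (e (j, 1)), fun j => y (e (j, 1)))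
  invFun wu := fun i => if (e.symm i).2 = 0 then wu.1 (e.symm i).1 + wu.2 (e.symm i).1
    else wu.2 (e.symm i).1
  left_inv y := by
    funext i
    obtain ⟨⟨j, b⟩, rfl⟩ := e.surjective i
    fin_cases b
    · simp [pl_add_cancel]
    · simp
  right_inv wu := by
    ext j
    · simp [pl_add_cancel]
    · simp

/-- plain splitting -/
def plSpl {ι J : Type*} (e : ι × Fin 2 ≃ J) : (J → ZMod 2) ≃ (ι → ZMod 2) × (ι → ZMod 2) where
  toFun y := (fun j => y (e (j, 0)), fun j => y (e (j, 1)))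
  invFun wu := fun i => if (e.symm i).2 = 0 then wu.1 (e.symm i).1 else wu.2 (e.symm i).1
  left_inv y := by
    funext i
    obtain ⟨⟨j, b⟩, rfl⟩ := e.surjective i
    fin_cases b
    · simp
    · simp
  right_inv wu := by
    ext j
    · simp
    · simp

/-- index equivalence used by `polarG` -/
def plE (n : ℕ) : Fin (2 ^ n) × Fin 2 ≃ Fin (2 ^ (n + 1)) :=
  finProdFinEquiv.trans (finCongr (pow_succ 2 n).symm)

lemma plE_val (n : ℕ) (j : Fin (2 ^ n)) (b : Fin 2) : (plE n (j, b) : ℕ) = b + 2 * j := by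
  simp [plE]

lemma pl_vecMul (n : ℕ) (x : Fin (2 ^ (n + 1)) → ZMod 2) :
    plDbl (plE n) (Matrix.vecMul x (polarG (n + 1))) =
      (Matrix.vecMul (plSpl (plE n) x).1 (polarG n), Matrix.vecMul (plSpl (plE n) x).2 (polarG n)) := by
  have key : ∀ k b, Matrix.vecMul x (polarG (n + 1)) (plE n (k, b)) =
      ∑ i, (x (plE n (i, 0)) * (polarG n i k * (Matrix.of ![![1, 0], ![1, 1]] : Matrix (Fin 2) (Fin 2) (ZMod 2)) 0 b)
        + x (plE n (i, 1)) * (polarG n i k * (Matrix.of ![![1, 0], ![1, 1]] : Matrix (Fin 2) (Fin 2) (ZMod 2)) 1 b)) := by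
    intro k b
    simp only [Matrix.vecMul, dotProduct]
    rw [← (plE n).sum_comp, Fintype.sum_prod_type]
    apply Finset.sum_congr rfl
    intro i _
    rw [Fin.sum_univ_two]
    simp [polarG, plE]
  have k1 : ∀ k, Matrix.vecMul x (polarG (n + 1)) (plE n (k, 1)) =
      Matrix.vecMul (plSpl (plE n) x).2 (polarG n) k := by
    intro k
    rw [key]
    simp [Matrix.vecMul, dotProduct, plSpl]
  have k0 : ∀ k, Matrix.vecMul x (polarG (n + 1)) (plE n (k, 0)) =
      Matrix.vecMul (plSpl (plE n) x).1 (polarG n) k + Matrix.vecMul (plSpl (plE n) x).2 (polarG n) k := by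
    intro k
    rw [key]
    simp [Matrix.vecMul, dotProduct, plSpl, Finset.sum_add_distrib]
  ext k
  · simp only [plDbl, Equiv.coe_fn_mk]
    rw [k0, k1, pl_add_cancel]
  · simp only [plDbl, Equiv.coe_fn_mk]
    rw [k1]

lemma pl_iid (pX : ZMod 2 → ℝ) (n : ℕ) (x : Fin (2 ^ (n + 1)) → ZMod 2) :
    iid pX (2 ^ (n + 1)) x =
      iid pX (2 ^ n) (plSpl (plE n) x).1 * iid pX (2 ^ n) (plSpl (plE n) x).2 := by
  unfold iid
  rw [← (plE n).prod_comp, Fintype.prod_prod_type, ← Finset.prod_mul_distrib]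
  apply Finset.prod_congr rfl
  intro i _
  rw [Fin.prod_univ_two]
  rfl

lemma polarA_succ (pX : ZMod 2 → ℝ) (n : ℕ) (a : Fin (2 ^ (n + 1)) → ZMod 2) :
    polarA pX (n + 1) a =
      polarA pX n (plDbl (plE n) a).1 * polarA pX n (plDbl (plE n) a).2 := by
  unfold polarA push
  rw [Finset.sum_mul_sum, ← Fintype.sum_prod_type', ← (plSpl (plE n)).sum_comp]
  apply Finset.sum_congr rfl
  intro x _
  have hiff : Matrix.vecMul x (polarG (n + 1)) = a ↔
      (Matrix.vecMul (plSpl (plE n) x).1 (polarG n) = (plDbl (plE n) a).1 ∧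
        Matrix.vecMul (plSpl (plE n) x).2 (polarG n) = (plDbl (plE n) a).2) := by
    rw [← (plDbl (plE n)).injective.eq_iff, pl_vecMul, Prod.ext_iff]
  rw [pl_iid]
  by_cases h1 : Matrix.vecMul (plSpl (plE n) x).1 (polarG n) = (plDbl (plE n) a).1
  · by_cases h2 : Matrix.vecMul (plSpl (plE n) x).2 (polarG n) = (plDbl (plE n) a).2
    · rw [if_pos (hiff.2 ⟨h1, h2⟩), if_pos h1, if_pos h2]
    · rw [if_neg (fun h => h2 (hiff.1 h).2), if_neg h2, mul_zero]
  · rw [if_neg (fun h => h1 (hiff.1 h).1), if_neg h1, zero_mul]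

/-- prefix marginal -/
def plM {N : ℕ} (p : (Fin N → ZMod 2) → ℝ) (k : ℕ) (y : Fin k → ZMod 2) : ℝ :=
  ∑ a : Fin N → ZMod 2, if (∀ j : Fin k, ∀ h : (j : ℕ) < N, a ⟨j, h⟩ = y j) then p a else 0

lemma plM_push {N : ℕ} (p : (Fin N → ZMod 2) → ℝ) (k : ℕ) (hk : k ≤ N) :
    push p (fun a => fun j : Fin k => a (Fin.castLE hk j)) = plM p k := by
  funext y
  unfold push plM
  apply Finset.sum_congr rfl
  intro a _
  have : (fun j : Fin k => a (Fin.castLE hk j)) = y ↔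
      (∀ j : Fin k, ∀ h : (j : ℕ) < N, a ⟨j, h⟩ = y j) := by
    rw [funext_iff]
    exact ⟨fun h j _ => h j, fun h j => h j (j.isLt.trans_le hk)⟩
  by_cases h : (fun j : Fin k => a (Fin.castLE hk j)) = y
  · rw [if_pos h, if_pos (this.1 h)]
  · rw [if_neg h, if_neg (fun h' => h (this.2 h'))]

lemma plM_nonneg {N : ℕ} {p : (Fin N → ZMod 2) → ℝ} (hp : ∀ a, 0 ≤ p a) (k : ℕ) (y : Fin k → ZMod 2) :
    0 ≤ plM p k y := by
  apply Finset.sum_nonneg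
  intro a _
  split_ifs
  · exact hp a
  · exact le_rfl

lemma plM_snoc {N : ℕ} (p : (Fin N → ZMod 2) → ℝ) (k : ℕ) (hk : k < N) (y : Fin k → ZMod 2) :
    plM p (k + 1) (Fin.snoc y 0 : Fin (k + 1) → ZMod 2) + plM p (k + 1) (Fin.snoc y 1 : Fin (k + 1) → ZMod 2) = plM p k y := by
  unfold plM
  rw [← Finset.sum_add_distrib]
  apply Finset.sum_congr rfl
  intro a _
  have hiff : ∀ b : ZMod 2, (∀ j : Fin (k + 1), ∀ h : (j : ℕ) < N, a ⟨j, h⟩ = (Fin.snoc y b : Fin (k + 1) → ZMod 2) j) ↔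
      ((∀ j : Fin k, ∀ h : (j : ℕ) < N, a ⟨j, h⟩ = y j) ∧ a ⟨k, hk⟩ = b) := by
    intro b
    rw [Fin.forall_fin_succ']
    simp [hk]
  have h2 : ∀ c : ZMod 2, c = 0 ∨ c = 1 := by decide
  simp only [hiff]
  by_cases hA : ∀ j : Fin k, ∀ h : (j : ℕ) < N, a ⟨j, h⟩ = y j
  · rcases h2 (a ⟨k, hk⟩) with h | h <;> simp [hA, h]
  · simp [hA]

lemma plM_zero {N : ℕ} (p : (Fin N → ZMod 2) → ℝ) (y : Fin 0 → ZMod 2) : plM p 0 y = ∑ a, p a := by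
  unfold plM
  apply Finset.sum_congr rfl
  intro a _
  simp

lemma plM_full {N : ℕ} (p : (Fin N → ZMod 2) → ℝ) : plM p N = p := by
  funext y
  unfold plM
  have : ∀ a : Fin N → ZMod 2, (∀ j : Fin N, ∀ h : (j : ℕ) < N, a ⟨j, h⟩ = y j) ↔ a = y := by
    intro a
    rw [funext_iff]
    exact ⟨fun h j => h j j.isLt, fun h j _ => h j⟩
  simp only [this]
  simp

lemma plM_dbl (pX : ZMod 2 → ℝ) (n k K : ℕ) (hK : k * 2 = K) (y : Fin K → ZMod 2) :
    plM (polarA pX (n + 1)) K y =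
      plM (polarA pX n) k (plDbl (finProdFinEquiv.trans (finCongr hK)) y).1 *
      plM (polarA pX n) k (plDbl (finProdFinEquiv.trans (finCongr hK)) y).2 := by
  subst hK
  unfold plM
  rw [Finset.sum_mul_sum, ← Fintype.sum_prod_type', ← (plDbl (plE n)).sum_comp]
  apply Finset.sum_congr rfl
  intro a _
  have hiff : (∀ j : Fin (k * 2), ∀ h : (j : ℕ) < 2 ^ (n + 1), a ⟨j, h⟩ = y j) ↔
      ((∀ j : Fin k, ∀ h : (j : ℕ) < 2 ^ n, (plDbl (plE n) a).1 ⟨j, h⟩ =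
        (plDbl (finProdFinEquiv.trans (finCongr rfl)) y).1 j) ∧
      (∀ j : Fin k, ∀ h : (j : ℕ) < 2 ^ n, (plDbl (plE n) a).2 ⟨j, h⟩ =
        (plDbl (finProdFinEquiv.trans (finCongr rfl)) y).2 j)) := by
    have hv : ∀ (j : Fin k) (h : (j : ℕ) < 2 ^ n) (b : Fin 2)
        (h' : ((finProdFinEquiv (j, b) : Fin (k * 2)) : ℕ) < 2 ^ (n + 1)),
        plE n (⟨j, h⟩, b) = ⟨(finProdFinEquiv (j, b) : Fin (k * 2)), h'⟩ := by
      intro j h b h'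
      apply Fin.ext
      rw [plE_val]
      simp
    have hlt : ∀ (j : Fin k) (h : (j : ℕ) < 2 ^ n) (b : Fin 2),
        ((finProdFinEquiv (j, b) : Fin (k * 2)) : ℕ) < 2 ^ (n + 1) := by
      intro j h b
      rw [pow_succ]
      simp
      omega
    constructor
    · intro H
      have H' : ∀ (j : Fin k) (h : (j : ℕ) < 2 ^ n) (b : Fin 2), a (plE n (⟨j, h⟩, b)) =
          y (finProdFinEquiv (j, b)) := by
        intro j h b
        rw [hv j h b (hlt j h b)]
        exact H _ _
      constructor
      · intro j h
        simp only [plDbl, Equiv.coe_fn_mk, H']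
        rfl
      · intro j h
        simp only [plDbl, Equiv.coe_fn_mk, H']
        rfl
    · rintro ⟨H1, H2⟩ i hi
      obtain ⟨⟨j, b⟩, rfl⟩ := finProdFinEquiv.surjective i
      have hj : (j : ℕ) < 2 ^ n := by
        rw [pow_succ] at hi
        simp at hi
        omega
      rw [← hv j hj b hi]
      have e2 : a (plE n (⟨j, hj⟩, 1)) = y (finProdFinEquiv (j, 1)) := H2 j hj
      have e1 : a (plE n (⟨j, hj⟩, 0)) + a (plE n (⟨j, hj⟩, 1)) =
        y (finProdFinEquiv (j, 0)) + y (finProdFinEquiv (j, 1)) := H1 j hj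
      rw [e2] at e1
      have e0 := add_right_cancel e1
      fin_cases b
      · exact e0
      · exact e2
  rw [polarA_succ]
  simp only [hiff]
  by_cases h1 : (∀ j : Fin k, ∀ h : (j : ℕ) < 2 ^ n, (plDbl (plE n) a).1 ⟨j, h⟩ =
        (plDbl (finProdFinEquiv.trans (finCongr rfl)) y).1 j)
  · by_cases h2 : (∀ j : Fin k, ∀ h : (j : ℕ) < 2 ^ n, (plDbl (plE n) a).2 ⟨j, h⟩ =
        (plDbl (finProdFinEquiv.trans (finCongr rfl)) y).2 j)
    · rw [if_pos ⟨h1, h2⟩, if_pos h1, if_pos h2]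
    · rw [if_neg (fun h => h2 h.2), if_neg h2, mul_zero]
  · rw [if_neg (fun h => h1 h.1), if_neg h1, zero_mul]

lemma pl_dbl_snoc (k : ℕ) (hK : (k + 1) * 2 = k * 2 + 1 + 1) (y : Fin (k * 2) → ZMod 2) (b c : ZMod 2) :
    plDbl (finProdFinEquiv.trans (finCongr hK))
      (Fin.snoc (Fin.snoc y b : Fin (k * 2 + 1) → ZMod 2) c : Fin (k * 2 + 1 + 1) → ZMod 2) =
    ((Fin.snoc (plDbl (finProdFinEquiv.trans (finCongr rfl)) y).1 (b + c) : Fin (k + 1) → ZMod 2),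
      (Fin.snoc (plDbl (finProdFinEquiv.trans (finCongr rfl)) y).2 c : Fin (k + 1) → ZMod 2)) := by
  have h1 : ∀ (j : Fin k) (b' : Fin 2), (finProdFinEquiv.trans (finCongr hK)) (j.castSucc, b') =
      (finProdFinEquiv (j, b') : Fin (k * 2)).castSucc.castSucc := by
    intro j b'; apply Fin.ext; simp
  have h2 : (finProdFinEquiv.trans (finCongr hK)) (Fin.last k, 1) = Fin.last _ := by
    apply Fin.ext; simp; ring
  have h3 : (finProdFinEquiv.trans (finCongr hK)) (Fin.last k, 0) = (Fin.last _).castSucc := by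
    apply Fin.ext; simp; ring
  ext j
  · refine Fin.lastCases ?_ (fun j => ?_) j
    · simp only [plDbl, Equiv.coe_fn_mk, h2, h3, Fin.snoc_last, Fin.snoc_castSucc]
    · simp only [plDbl, Equiv.coe_fn_mk, h1, Fin.snoc_castSucc]
      rfl
  · refine Fin.lastCases ?_ (fun j => ?_) j
    · simp only [plDbl, Equiv.coe_fn_mk, h2, Fin.snoc_last]
    · simp only [plDbl, Equiv.coe_fn_mk, h1, Fin.snoc_castSucc]
      rfl

lemma pl_sum_snoc (k : ℕ) (f : (Fin (k + 1) → ZMod 2) → ℝ) :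
    ∑ y, f y = ∑ y : Fin k → ZMod 2, (f (Fin.snoc y 0 : Fin (k + 1) → ZMod 2) + f (Fin.snoc y 1 : Fin (k + 1) → ZMod 2)) := by
  rw [← (Fin.snocEquiv (fun _ : Fin (k + 1) => ZMod 2)).sum_comp, Fintype.sum_prod_type, pl_sum_zmod2,
    ← Finset.sum_add_distrib]
  rfl

/-- conditional law -/
def plQ (pX : ZMod 2 → ℝ) (n k : ℕ) (y : Fin k → ZMod 2) (b : ZMod 2) : ℝ :=
  plM (polarA pX n) (k + 1) (Fin.snoc y b : Fin (k + 1) → ZMod 2)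

/-- generic functional -/
def plF (φ : ℝ → ℝ → ℝ) (pX : ZMod 2 → ℝ) (n k : ℕ) : ℝ :=
  ∑ y : Fin k → ZMod 2, φ (plQ pX n k y 0) (plQ pX n k y 1)

lemma plQ_two (pX : ZMod 2 → ℝ) (n k : ℕ) (y : Fin (k * 2) → ZMod 2) (b c : ZMod 2) :
    plQ pX (n + 1) (k * 2 + 1) (Fin.snoc y b : Fin (k * 2 + 1) → ZMod 2) c =
      plQ pX n k (plDbl (finProdFinEquiv.trans (finCongr rfl)) y).1 (b + c) *
      plQ pX n k (plDbl (finProdFinEquiv.trans (finCongr rfl)) y).2 c := by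
  unfold plQ
  rw [plM_dbl pX n (k + 1) (k * 2 + 1 + 1) (by ring), pl_dbl_snoc]

lemma plQ_one (pX : ZMod 2 → ℝ) (n k : ℕ) (hk : k < 2 ^ n) (y : Fin (k * 2) → ZMod 2) (b : ZMod 2) :
    plQ pX (n + 1) (k * 2) y b =
      plQ pX n k (plDbl (finProdFinEquiv.trans (finCongr rfl)) y).1 b *
      plQ pX n k (plDbl (finProdFinEquiv.trans (finCongr rfl)) y).2 0 +
      plQ pX n k (plDbl (finProdFinEquiv.trans (finCongr rfl)) y).1 (b + 1) *
      plQ pX n k (plDbl (finProdFinEquiv.trans (finCongr rfl)) y).2 1 := by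
  have h : k * 2 + 1 < 2 ^ (n + 1) := by rw [pow_succ]; omega
  have h1 := plQ_two pX n k y b 0
  have h2 := plQ_two pX n k y b 1
  rw [add_zero] at h1
  rw [← h1, ← h2]
  unfold plQ
  rw [plM_snoc _ _ h]

lemma plF_even (φ : ℝ → ℝ → ℝ) (pX : ZMod 2 → ℝ) (n k : ℕ) (hk : k < 2 ^ n) :
    plF φ pX (n + 1) (k * 2) = ∑ w : Fin k → ZMod 2, ∑ u : Fin k → ZMod 2,
      φ (plQ pX n k w 0 * plQ pX n k u 0 + plQ pX n k w 1 * plQ pX n k u 1)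
        (plQ pX n k w 1 * plQ pX n k u 0 + plQ pX n k w 0 * plQ pX n k u 1) := by
  unfold plF
  rw [← Fintype.sum_prod_type', ← (plDbl (finProdFinEquiv.trans (finCongr rfl))).sum_comp]
  apply Finset.sum_congr rfl
  intro y _
  rw [plQ_one pX n k hk, plQ_one pX n k hk, zero_add, show (1 + 1 : ZMod 2) = 0 from rfl]

lemma plF_odd (φ : ℝ → ℝ → ℝ) (pX : ZMod 2 → ℝ) (n k : ℕ) :
    plF φ pX (n + 1) (k * 2 + 1) = ∑ w : Fin k → ZMod 2, ∑ u : Fin k → ZMod 2,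
      (φ (plQ pX n k w 0 * plQ pX n k u 0) (plQ pX n k w 1 * plQ pX n k u 1) +
       φ (plQ pX n k w 1 * plQ pX n k u 0) (plQ pX n k w 0 * plQ pX n k u 1)) := by
  unfold plF
  rw [← Fintype.sum_prod_type', ← (plDbl (finProdFinEquiv.trans (finCongr rfl))).sum_comp, pl_sum_snoc]
  apply Finset.sum_congr rfl
  intro y _
  simp only [plQ_two]
  rw [zero_add, add_zero, zero_add, show (1 + 1 : ZMod 2) = 0 from rfl]

/-! ### Assembling -/

lemma pl_sum_iid (pX : ZMod 2 → ℝ) (hX : IsPMF pX) (N : ℕ) : ∑ x, iid pX N x = 1 := by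
  unfold iid
  rw [← Fintype.prod_sum]
  simp [hX.2]

lemma polarA_nonneg (pX : ZMod 2 → ℝ) (hX : IsPMF pX) (n : ℕ) (a : Fin (2 ^ n) → ZMod 2) :
    0 ≤ polarA pX n a := by
  unfold polarA push
  apply Finset.sum_nonneg
  intro x _
  split_ifs
  · exact Finset.prod_nonneg fun i _ => hX.1 _
  · exact le_rfl

lemma polarA_sum (pX : ZMod 2 → ℝ) (hX : IsPMF pX) (n : ℕ) : ∑ a, polarA pX n a = 1 := by
  unfold polarA push
  rw [Finset.sum_comm, ← pl_sum_iid pX hX (2 ^ n)]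
  apply Finset.sum_congr rfl
  intro x _
  rw [Finset.sum_eq_single (Matrix.vecMul x (polarG n))]
  · rw [if_pos rfl]
  · intro b _ hb
    rw [if_neg (fun h => hb h.symm)]
  · intro h
    exact absurd (Finset.mem_univ _) h

lemma plM_sum (pX : ZMod 2 → ℝ) (hX : IsPMF pX) (n k : ℕ) (hk : k ≤ 2 ^ n) :
    ∑ y, plM (polarA pX n) k y = 1 := by
  induction k with
  | zero => simp [plM_zero, polarA_sum pX hX]
  | succ k ih =>
    rw [pl_sum_snoc, Finset.sum_congr rfl (fun y _ => plM_snoc _ k hk y)]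
    exact ih (by omega)

lemma plQ_nonneg (pX : ZMod 2 → ℝ) (hX : IsPMF pX) (n k : ℕ) (y : Fin k → ZMod 2) (b : ZMod 2) :
    0 ≤ plQ pX n k y b := plM_nonneg (polarA_nonneg pX hX n) _ _

lemma plQ_sum (pX : ZMod 2 → ℝ) (hX : IsPMF pX) (n k : ℕ) (hk : k < 2 ^ n) :
    ∑ y : Fin k → ZMod 2, (plQ pX n k y 0 + plQ pX n k y 1) = 1 := by
  unfold plQ
  rw [Finset.sum_congr rfl (fun y _ => plM_snoc _ k hk y)]
  exact plM_sum pX hX n k hk.le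

lemma pl_double_bound {ι : Type*} [Fintype ι] (A C : ι → ℝ) (h1 : ∑ i, C i = 1) :
    ∑ w, ∑ u, (A w * C u + C w * A u - A w * A u) = 2 * (∑ i, A i) - (∑ i, A i) ^ 2 := by
  simp only [Finset.sum_sub_distrib, Finset.sum_add_distrib, ← Finset.mul_sum, ← Finset.sum_mul, h1]
  ring

lemma pl_hyp (pX : ZMod 2 → ℝ) (hX : IsPMF pX) : PlHyp (plF plPZ pX) (plF plPT pX) where
  z0 n i hi := Finset.sum_nonneg fun y _ => by unfold plPZ; positivity
  t0 n i hi := Finset.sum_nonneg fun y _ => by unfold plPT; positivity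
  zt n i hi := by
    apply pl_minkowski _ _ (fun y => plQ pX n i y 0 + plQ pX n i y 1)
    · intro y; exact add_nonneg (plQ_nonneg pX hX _ _ _ _) (plQ_nonneg pX hX _ _ _ _)
    · intro y; exact plPZT _ _ (plQ_nonneg pX hX _ _ _ _) (plQ_nonneg pX hX _ _ _ _)
    · exact plQ_sum pX hX n i hi
  zm n i hi := by
    rw [plF_even _ _ _ _ hi]
    refine le_trans ?_ (pl_double_bound (fun y => plPZ (plQ pX n i y 0) (plQ pX n i y 1)) _
      (plQ_sum pX hX n i hi)).le
    apply Finset.sum_le_sum; intro w _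
    apply Finset.sum_le_sum; intro u _
    exact plPZ_minus (plQ_nonneg pX hX _ _ _ _) (plQ_nonneg pX hX _ _ _ _)
      (plQ_nonneg pX hX _ _ _ _) (plQ_nonneg pX hX _ _ _ _)
  zp n i hi := by
    rw [plF_odd, sq]
    conv_rhs => rw [plF, Finset.sum_mul_sum]
    apply le_of_eq
    apply Finset.sum_congr rfl; intro w _
    apply Finset.sum_congr rfl; intro u _
    exact plPZ_plus (plQ_nonneg pX hX _ _ _ _) (plQ_nonneg pX hX _ _ _ _)
  tm n i hi := by
    rw [plF_even _ _ _ _ hi, sq]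
    conv_rhs => rw [plF, Finset.sum_mul_sum]
    apply le_of_eq
    apply Finset.sum_congr rfl; intro w _
    apply Finset.sum_congr rfl; intro u _
    exact plPT_minus _ _ _ _
  tp n i hi := by
    rw [plF_odd]
    refine le_trans ?_ (pl_double_bound (fun y => plPT (plQ pX n i y 0) (plQ pX n i y 1)) _
      (plQ_sum pX hX n i hi)).le
    apply Finset.sum_le_sum; intro w _
    apply Finset.sum_le_sum; intro u _
    exact plPT_plus (plQ_nonneg pX hX _ _ _ _) (plQ_nonneg pX hX _ _ _ _)
      (plQ_nonneg pX hX _ _ _ _) (plQ_nonneg pX hX _ _ _ _)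

lemma pl_condH_sub (pX : ZMod 2 → ℝ) (n : ℕ) (i : Fin (2 ^ n)) :
    polarCondH pX n i = Hsh (plM (polarA pX n) (i + 1)) - Hsh (plM (polarA pX n) i) := by
  unfold polarCondH
  rw [plM_push, plM_push]

lemma pl_condH_eq (pX : ZMod 2 → ℝ) (n : ℕ) (i : Fin (2 ^ n)) :
    polarCondH pX n i = plF plPH pX n i := by
  rw [pl_condH_sub]
  unfold Hsh plF
  rw [pl_sum_snoc, neg_sub_neg, ← Finset.sum_sub_distrib]
  apply Finset.sum_congr rfl
  intro y _
  rw [← plM_snoc _ _ i.isLt y]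
  simp only [plPH, plQ]
  ring

lemma pl_condH_nonneg (pX : ZMod 2 → ℝ) (hX : IsPMF pX) (n : ℕ) (i : Fin (2 ^ n)) :
    0 ≤ polarCondH pX n i := by
  rw [pl_condH_eq]
  exact Finset.sum_nonneg fun y _ => plPH_nonneg (plQ_nonneg pX hX _ _ _ _) (plQ_nonneg pX hX _ _ _ _)

lemma pl_condH_le_one (pX : ZMod 2 → ℝ) (hX : IsPMF pX) (n : ℕ) (i : Fin (2 ^ n)) :
    polarCondH pX n i ≤ 1 := by
  rw [pl_condH_eq, ← plQ_sum pX hX n i i.isLt]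
  exact Finset.sum_le_sum fun y _ =>
    plPH_le_one (plQ_nonneg pX hX _ _ _ _) (plQ_nonneg pX hX _ _ _ _)

lemma pl_condH_le_Z (pX : ZMod 2 → ℝ) (hX : IsPMF pX) (n : ℕ) (i : Fin (2 ^ n)) :
    polarCondH pX n i ≤ 2 * plF plPZ pX n i := by
  rw [pl_condH_eq, plF, plF, Finset.mul_sum]
  exact Finset.sum_le_sum fun y _ =>
    plPH_le_Z (plQ_nonneg pX hX _ _ _ _) (plQ_nonneg pX hX _ _ _ _)

lemma pl_condH_ge_T (pX : ZMod 2 → ℝ) (hX : IsPMF pX) (n : ℕ) (i : Fin (2 ^ n)) :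
    1 - polarCondH pX n i ≤ 2 * plF plPT pX n i := by
  rw [pl_condH_eq, ← plQ_sum pX hX n i i.isLt, plF, plF, Finset.mul_sum, ← Finset.sum_sub_distrib]
  exact Finset.sum_le_sum fun y _ =>
    plPH_ge_T (plQ_nonneg pX hX _ _ _ _) (plQ_nonneg pX hX _ _ _ _)

lemma pl_Hsh_succ (pX : ZMod 2 → ℝ) (hX : IsPMF pX) (n : ℕ) :
    Hsh (polarA pX (n + 1)) = 2 * Hsh (polarA pX n) := by
  have h1 := polarA_sum pX hX n
  unfold Hsh
  have : ∑ a, polarA pX (n + 1) a * Real.logb 2 (polarA pX (n + 1) a) =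
      ∑ w, ∑ u, (polarA pX n w * Real.logb 2 (polarA pX n w) * polarA pX n u +
        polarA pX n w * (polarA pX n u * Real.logb 2 (polarA pX n u))) := by
    rw [← Fintype.sum_prod_type', ← (plDbl (plE n)).sum_comp]
    apply Finset.sum_congr rfl
    intro a _
    rw [polarA_succ]
    by_cases hw : polarA pX n (plDbl (plE n) a).1 = 0
    · simp [hw]
    · by_cases hu : polarA pX n (plDbl (plE n) a).2 = 0
      · simp [hu]
      · rw [Real.logb_mul hw hu]; ring
  rw [this]
  simp only [Finset.sum_add_distrib, ← Finset.mul_sum, ← Finset.sum_mul, h1]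
  ring

lemma pl_Hsh_zero (pX : ZMod 2 → ℝ) : Hsh (polarA pX 0) = Hsh pX := by
  have h : ∀ a : Fin 1 → ZMod 2, polarA pX 0 a = pX (a 0) := by
    intro a
    unfold polarA push
    have : ∀ x : Fin (2 ^ 0) → ZMod 2, Matrix.vecMul x (polarG 0) = x := by
      intro x; simp [polarG]
    simp only [this]
    rw [Finset.sum_ite_eq']
    simp [iid]
  unfold Hsh
  congr 1
  refine Fintype.sum_equiv (Equiv.funUnique (Fin 1) (ZMod 2)) _ _ ?_
  intro a
  rw [h]
  rfl

lemma pl_Hsh (pX : ZMod 2 → ℝ) (hX : IsPMF pX) (n : ℕ) : Hsh (polarA pX n) = 2 ^ n * Hsh pX := by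
  induction n with
  | zero => rw [pl_Hsh_zero]; simp
  | succ n ih => rw [pl_Hsh_succ pX hX, ih]; ring

lemma pl_sum_condH (pX : ZMod 2 → ℝ) (hX : IsPMF pX) (n : ℕ) :
    ∑ i, polarCondH pX n i = 2 ^ n * Hsh pX := by
  simp only [pl_condH_sub]
  rw [← Finset.sum_range (fun i => Hsh (plM (polarA pX n) (i + 1)) - Hsh (plM (polarA pX n) i)),
    Finset.sum_range_sub (fun i => Hsh (plM (polarA pX n) i)), plM_full, pl_Hsh pX hX]
  have : Hsh (plM (polarA pX n) 0) = 0 := by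
    simp [Hsh, plM_zero, polarA_sum pX hX]
  rw [this, sub_zero]

lemma pl_delta (β : ℝ) (hβ : 0 < β) : Tendsto (fun n => polarδ n β) atTop (nhds 0) := by
  have h1 : Tendsto (fun n : ℕ => ((2:ℝ) ^ n) ^ β) atTop atTop :=
    (tendsto_rpow_atTop hβ).comp (tendsto_pow_atTop_atTop_of_one_lt (by norm_num))
  have h2 : Tendsto (fun x : ℝ => (2:ℝ) ^ (-x)) atTop (nhds 0) := by
    have := (tendsto_rpow_atTop_of_base_gt_one (2:ℝ) (by norm_num)).inv_tendsto_atTop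
    refine this.congr fun x => ?_
    simp [Real.rpow_neg]
  exact h2.comp h1

lemma pl_diff (pX : ZMod 2 → ℝ) (hX : IsPMF pX) (β : ℝ) (hβ0 : 0 < β) (hβ : β < 1 / 2) :
    Tendsto (fun (n : ℕ) => (((polarH pX β n) \ (polarV pX β n)).card : ℝ) / (2 ^ n : ℕ))
      atTop (nhds 0) := by
  refine squeeze_zero (fun n => by positivity) (fun n => ?_) (pl_main (pl_hyp pX hX) β hβ0 hβ)
  push_cast
  apply div_le_div_of_nonneg_right _ (by positivity)
  refine Nat.cast_le.2 ?_
  apply Finset.card_le_card_of_injOn (fun i : Fin (2 ^ n) => (i : ℕ))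
  · intro i hi
    simp only [Finset.coe_sdiff, polarH, polarV, Finset.coe_filter, Finset.mem_univ, true_and,
      Set.mem_sdiff, Set.mem_ofPred_eq, not_lt] at hi
    simp only [Finset.coe_filter, Finset.mem_range, Set.mem_ofPred_eq]
    have h1 := pl_condH_le_Z pX hX n i
    have h2 := pl_condH_ge_T pX hX n i
    unfold polarδ at hi
    exact ⟨i.isLt, by linarith [hi.1], by linarith [hi.2]⟩
  · intro i _ j _ h
    exact Fin.ext h

/-- Lemma 6: asymptotics of the cardinalities of the polarization
sets `H_X` and `V_X`. -/
theorem statement10 (pX : ZMod 2 → ℝ) (hX : IsPMF pX)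
    (β : ℝ) (hβ0 : 0 < β) (hβ : β < 1 / 2) :
    Tendsto (fun (n : ℕ) => ((polarH pX β n).card : ℝ) / (2 ^ n : ℕ)) atTop
      (nhds (Hsh pX)) ∧
    Tendsto (fun (n : ℕ) => ((polarV pX β n).card : ℝ) / (2 ^ n : ℕ)) atTop
      (nhds (Hsh pX)) ∧
    Tendsto (fun (n : ℕ) => (((polarH pX β n) \ (polarV pX β n)).card : ℝ) / (2 ^ n : ℕ))
      atTop (nhds 0) := by
  have hd := pl_diff pX hX β hβ0 hβ
  have hδ := pl_delta β hβ0
  have hδ0 : ∀ n, 0 < polarδ n β := fun n => by unfold polarδ; positivity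
  have hN : ∀ n : ℕ, (0:ℝ) < (2 ^ n : ℕ) := fun n => by positivity
  have hcast : ∀ n : ℕ, ((2 ^ n : ℕ) : ℝ) = 2 ^ n := fun n => by push_cast; rfl
  have hlow : ∀ n, Hsh pX - polarδ n β ≤ ((polarH pX β n).card : ℝ) / (2 ^ n : ℕ) := by
    intro n
    rw [le_div_iff₀ (hN n)]
    have h1 : ∑ i, polarCondH pX n i ≤
        ∑ i, ((if polarδ n β < polarCondH pX n i then (1:ℝ) else 0) + polarδ n β) := by
      apply Finset.sum_le_sum
      intro i _
      split_ifs with h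
      · linarith [pl_condH_le_one pX hX n i, hδ0 n]
      · linarith
    rw [pl_sum_condH pX hX, Finset.sum_add_distrib, Finset.sum_boole] at h1
    simp only [Finset.sum_const, Finset.card_univ, Fintype.card_fin, nsmul_eq_mul] at h1
    rw [hcast] at h1 ⊢
    have h2 : (polarH pX β n).card = (Finset.univ.filter fun i => polarδ n β < polarCondH pX n i).card := rfl
    rw [h2]
    linarith
  have hup : ∀ n, ((polarV pX β n).card : ℝ) / (2 ^ n : ℕ) ≤ Hsh pX + polarδ n β := by
    intro n
    rw [div_le_iff₀ (hN n)]
    have h1 : ∑ i, ((if 1 - polarδ n β < polarCondH pX n i then (1:ℝ) else 0) - polarδ n β) ≤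
        ∑ i, polarCondH pX n i := by
      apply Finset.sum_le_sum
      intro i _
      split_ifs with h
      · linarith
      · linarith [pl_condH_nonneg pX hX n i, hδ0 n]
    rw [pl_sum_condH pX hX, Finset.sum_sub_distrib, Finset.sum_boole] at h1
    simp only [Finset.sum_const, Finset.card_univ, Fintype.card_fin, nsmul_eq_mul] at h1
    rw [hcast] at h1 ⊢
    have h2 : (polarV pX β n).card = (Finset.univ.filter fun i => 1 - polarδ n β < polarCondH pX n i).card := rfl
    rw [h2]
    linarith
  have hmid : ∀ n, ((polarH pX β n).card : ℝ) / (2 ^ n : ℕ) ≤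
      ((polarV pX β n).card : ℝ) / (2 ^ n : ℕ) +
      (((polarH pX β n) \ (polarV pX β n)).card : ℝ) / (2 ^ n : ℕ) := by
    intro n
    rw [← add_div]
    apply div_le_div_of_nonneg_right _ (hN n).le
    have h1 : (polarH pX β n).card ≤ (polarV pX β n).card + (polarH pX β n \ polarV pX β n).card := by
      rw [add_comm]
      exact Finset.card_le_card_sdiff_add_card
    exact_mod_cast h1
  refine ⟨?_, ?_, hd⟩
  · refine tendsto_of_tendsto_of_tendsto_of_le_of_le (g := fun n => Hsh pX - polarδ n β)
      (h := fun n => Hsh pX + polarδ n β + (((polarH pX β n) \ (polarV pX β n)).card : ℝ) / (2 ^ n : ℕ))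
      ?_ ?_ hlow (fun n => by have := hmid n; have := hup n; dsimp only; linarith)
    · simpa using (tendsto_const_nhds (x := Hsh pX)).sub hδ
    · simpa using ((tendsto_const_nhds (x := Hsh pX)).add hδ).add hd
  · refine tendsto_of_tendsto_of_tendsto_of_le_of_le
      (g := fun n => Hsh pX - polarδ n β - (((polarH pX β n) \ (polarV pX β n)).card : ℝ) / (2 ^ n : ℕ))
      (h := fun n => Hsh pX + polarδ n β)
      ?_ ?_ (fun n => by have := hmid n; have := hlow n; dsimp only; linarith) hup
    · simpa using ((tendsto_const_nhds (x := Hsh pX)).sub hδ).sub hd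
    · simpa using (tendsto_const_nhds (x := Hsh pX)).add hδ
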